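/- Let p ≥ 1 be odd and q ≥ 2 with m = pq (the group G(m,p,2)). For 1 ≤ j ≤ p set ξ_j := [[Y, 2X^j],[2X^{p+1−j}, XY]], φ_j := [[Y, 2X^j],[2X^{p−j}, Y]], ψ_j := [[XY, −2X^{j+1}],[−2X^{p+1−j}, XY]]. Then there is an isomorphism of R-modules S/(z) ≅ (⊕_{j=1}^{p} Coker(ξ_j)^{2(q−1)}) ⊕ (⊕_{j=1}^{(p−1)/2} Coker(ψ_j)^{2}) ⊕ (⊕_{j=1}^{(p−1)/2} Coker(φ_j)^{2(q−1)²}) ⊕ R/(X) ⊕ (R/(Y² − 4X^p))^{(q−1) + 2·binom(q−1,2)} ⊕ R/(X(Y² − 4X^p)), where M^{k} denotes the direct sum of k copies of the module M. -/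

import Mathlib

/-!
Put `u = x ^ q`, `v = y ^ q` and `m = p * q`. Grade `S` by `ℤ² / ⟨(q, q), (m, 0), (0, m)⟩`; both
`φ(X)` and `φ(Y)` have degree `0`, so every graded piece is an `R`-submodule. The piece containing
`x ^ r * y ^ s * u ^ k` (with `r, s < q` and `0 < k < p`) is free of rank two over `R`, with basis
`x ^ r * y ^ s * u ^ k`, `x ^ r * y ^ s * v ^ (p - k)`; for `k = 0` a basis is
`x ^ r * y ^ s`, `x ^ r * y ^ s * (x ^ m - y ^ m)`, or `x ^ r * y ^ s`, `x ^ r * y ^ s * u ^ p`.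

The polynomial `z` is homogeneous, so multiplication by `z` carries each piece into another one and
is given there by a `2 × 2` matrix over `R`. In suitable bases these matrices are exactly `ξ_j`,
`φ_j`, `ψ_j`, `diag(X(Y² - 4X^p), X)` and `diag(Y² - 4X^p, 1)`, so `S/(z)`, the cokernel of
multiplication by `z` on `S = ⊕ pieces`, is the direct sum of their cokernels. Which matrix occurs
depends on whether multiplication by `xy` makes zero, one or two of the residues mod `q` of the
exponents of `x` and `y` wrap around to `0`.

Concretely, `src` and `tgt` are two families of pairs in `S`, with `zpol_mul_src` expressing
`z * src` through `tgt` by the matrices `matM`. Both families generate `S` over `R`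
(`src_span`, `tgt_span`), because modulo the images of `X` and `Y` every monomial reduces to some
`x ^ r * y ^ s * u ^ i` or `x ^ r * y ^ s * v ^ i` with `i ≤ p`. The family `tgt` is independent
(`tgt_injective`): different pairs have different degrees, and within one pair the determinant with
respect to the involution `x ↔ y` is a nonzero multiple of `(xy) ^ n * (x ^ m - y ^ m)`, so Cramer's
rule applies. That also needs `φ` injective, which holds because
`(a, b) ↦ ((ab) ^ q, a ^ m + b ^ m)` maps `ℂ²` onto `ℂ²`. The general statement
`quot_equiv_of_pairs` then produces the isomorphism, and `regroup` collects equal summands.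
-/

open MvPolynomial

noncomputable section

/-- `S = ℂ[x,y]` -/
abbrev Spoly : Type := MvPolynomial Bool ℂ

/-- `R = ℂ[X,Y]` -/
abbrev Rpoly : Type := MvPolynomial (Fin 2) ℂ

def xv : Spoly := X false
def yv : Spoly := X true
def Xv : Rpoly := X 0
def Yv : Rpoly := X 1

/-- The map `R → S`, `X ↦ (xy)^q`, `Y ↦ x^m + y^m`. -/
def phi (m q : ℕ) : Rpoly →+* Spoly :=
  (aeval ![(xv * yv) ^ q, xv ^ m + yv ^ m]).toRingHom

/-- `z = xy(x^m - y^m)`. -/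
def zpol (m : ℕ) : Spoly := xv * yv * (xv ^ m - yv ^ m)

/-- Cokernel of a 2×2 matrix over `R`. -/
abbrev coker (A : Matrix (Fin 2) (Fin 2) Rpoly) : Type :=
  (Fin 2 → Rpoly) ⧸ LinearMap.range A.mulVecLin

/-- `ξ_j` -/
def xiM (p j : ℕ) : Matrix (Fin 2) (Fin 2) Rpoly :=
  !![Yv, 2 * Xv ^ j; 2 * Xv ^ (p + 1 - j), Xv * Yv]

/-- `φ_j` -/
def phiM (p j : ℕ) : Matrix (Fin 2) (Fin 2) Rpoly :=
  !![Yv, 2 * Xv ^ j; 2 * Xv ^ (p - j), Yv]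

/-- `ψ_j` -/
def psiM (p j : ℕ) : Matrix (Fin 2) (Fin 2) Rpoly :=
  !![Xv * Yv, -2 * Xv ^ (j + 1); -2 * Xv ^ (p + 1 - j), Xv * Yv]

/-! ### The matrices of multiplication by `z` -/

/-- Index set of the graded pieces of `S`. In this order, the summands index the `ξ`, `ψ` and `φ`
blocks, the block `diag(X(Y² - 4X^p), X)` and the blocks `diag(Y² - 4X^p, 1)`. The coordinate in
`Fin p` or `Fin ((p - 1) / 2)` is `j - 1` in the notation `ξ_j`, `ψ_j`, `φ_j`; the Boolean picks
one of two blocks exchanged by the symmetry `x ↔ y`. -/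
abbrev Idx (p q : ℕ) : Type :=
  (Fin p × Bool × Fin (q - 1)) ⊕ (Fin ((p - 1) / 2) × Bool) ⊕
    (Fin ((p - 1) / 2) × Bool × Fin (q - 1) × Fin (q - 1)) ⊕ Unit ⊕ (Fin (q - 1) × Fin (q - 1))

/-- The sign relating a block to its mirror image: `z` changes sign under `x ↔ y`. -/
def sgn (b : Bool) : Spoly := if b then -1 else 1

/-- A pair in `S` spanning the graded piece `t` over `R`: the basis of the codomain of
multiplication by `z`. -/
def tgt (p q : ℕ) : Idx p q → Fin 2 → Spoly
  | .inl (j, b, a) =>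
      ![X (!b) ^ (a + 1 : ℕ) * (X b ^ q) ^ (p - j : ℕ),
        -(X (!b) ^ (a + 1 : ℕ) * (X (!b) ^ q) ^ (j : ℕ))]
  | .inr (.inl (j, b)) => ![(X b ^ q) ^ (p - (j + 1) : ℕ), (X (!b) ^ q) ^ (j + 1 : ℕ)]
  | .inr (.inr (.inl (j, b, a, c))) =>
      ![xv ^ (a + 1 : ℕ) * yv ^ (c + 1 : ℕ) * (X b ^ q) ^ (p - (j + 1) : ℕ),
        -(xv ^ (a + 1 : ℕ) * yv ^ (c + 1 : ℕ) * (X (!b) ^ q) ^ (j + 1 : ℕ))]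
  | .inr (.inr (.inr (.inl _))) => ![1, xv ^ (p * q) - yv ^ (p * q)]
  | .inr (.inr (.inr (.inr (a, c)))) =>
      ![xv ^ (a + 1 : ℕ) * yv ^ (c + 1 : ℕ),
        xv ^ (a + 1 : ℕ) * yv ^ (c + 1 : ℕ) * (xv ^ (p * q) - yv ^ (p * q))]

/-- A pair in `S` spanning the graded piece which multiplication by `z` carries into piece `t`. -/
def src (p q : ℕ) : Idx p q → Fin 2 → Spoly
  | .inl (j, b, a) =>
      ![sgn b * (X b ^ (q - 1) * X (!b) ^ (a : ℕ) * (X b ^ q) ^ (p - (j + 1) : ℕ)),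
        sgn b * (X b ^ (q - 1) * X (!b) ^ (a : ℕ) * (X (!b) ^ q) ^ (j + 1 : ℕ))]
  | .inr (.inl (j, b)) =>
      ![sgn b * (xv ^ (q - 1) * yv ^ (q - 1) * (X b ^ q) ^ (p - (j + 1) : ℕ)),
        -(sgn b * (xv ^ (q - 1) * yv ^ (q - 1) * (X (!b) ^ q) ^ (j + 1 : ℕ)))]
  | .inr (.inr (.inl (j, b, a, c))) =>
      ![sgn b * (xv ^ (a : ℕ) * yv ^ (c : ℕ) * (X b ^ q) ^ (p - (j + 1) : ℕ)),
        sgn b * (xv ^ (a : ℕ) * yv ^ (c : ℕ) * (X (!b) ^ q) ^ (j + 1 : ℕ))]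
  | .inr (.inr (.inr (.inl _))) =>
      ![xv ^ (q - 1) * yv ^ (q - 1) * (xv ^ (p * q) - yv ^ (p * q)), xv ^ (q - 1) * yv ^ (q - 1)]
  | .inr (.inr (.inr (.inr (a, c)))) =>
      ![xv ^ (a : ℕ) * yv ^ (c : ℕ) * (xv ^ (p * q) - yv ^ (p * q)), xv ^ (a : ℕ) * yv ^ (c : ℕ)]

/-- The matrix of multiplication by `z` from the basis `src t` to the basis `tgt t`. -/
def matM (p q : ℕ) : Idx p q → Matrix (Fin 2) (Fin 2) Rpoly
  | .inl (j, _, _) => xiM p ((j : ℕ) + 1)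
  | .inr (.inl (j, _)) => psiM p ((j : ℕ) + 1)
  | .inr (.inr (.inl (j, _, _, _))) => phiM p ((j : ℕ) + 1)
  | .inr (.inr (.inr (.inl _))) => !![Xv * (Yv ^ 2 - 4 * Xv ^ p), 0; 0, Xv]
  | .inr (.inr (.inr (.inr _))) => !![Yv ^ 2 - 4 * Xv ^ p, 0; 0, 1]

theorem X_false : (X false : Spoly) = xv := rfl
theorem X_true : (X true : Spoly) = yv := rfl

theorem phi_Xv (m q : ℕ) : phi m q Xv = (xv * yv) ^ q := by
  simp [phi, Xv]

theorem phi_Yv (m q : ℕ) : phi m q Yv = xv ^ m + yv ^ m := by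
  simp [phi, Yv]

theorem zpol_mul_src (p q : ℕ) (hq : 2 ≤ q) (t : Idx p q) (j : Fin 2) :
    zpol (p * q) * src p q t j =
      phi (p * q) q (matM p q t 0 j) * tgt p q t 0 + phi (p * q) q (matM p q t 1 j) * tgt p q t 1 := by
  obtain ⟨n, rfl⟩ : ∃ n, q = n + 1 := ⟨q - 1, by omega⟩
  rcases t with ⟨⟨i, hi⟩, b, a⟩ | ⟨⟨i, hi⟩, b⟩ | ⟨⟨i, hi⟩, b, a, c⟩ | _ | ⟨a, c⟩
  · obtain ⟨k, rfl⟩ : ∃ k, p = i + 1 + k := ⟨p - (i + 1), by omega⟩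
    have e1 : i + 1 + k - (i + 1) = k := by omega
    have e2 : i + 1 + k - i = k + 1 := by omega
    have e3 : i + 1 + k + 1 - (i + 1) = k + 1 := by omega
    fin_cases j <;> cases b <;>
      simp [src, tgt, matM, xiM, sgn, zpol, phi_Xv, phi_Yv, e1, e2, e3, map_ofNat, X_false, X_true] <;> ring
  · obtain ⟨k, rfl⟩ : ∃ k, p = i + 1 + k := ⟨p - (i + 1), by omega⟩
    have e1 : i + 1 + k - (i + 1) = k := by omega
    have e3 : i + 1 + k + 1 - (i + 1) = k + 1 := by omega
    fin_cases j <;> cases b <;>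
      simp [src, tgt, matM, psiM, sgn, zpol, phi_Xv, phi_Yv, e1, e3, map_ofNat, X_false, X_true] <;> ring
  · obtain ⟨k, rfl⟩ : ∃ k, p = i + 1 + k := ⟨p - (i + 1), by omega⟩
    have e1 : i + 1 + k - (i + 1) = k := by omega
    fin_cases j <;> cases b <;>
      simp [src, tgt, matM, phiM, sgn, zpol, phi_Xv, phi_Yv, e1, map_ofNat, X_false, X_true] <;> ring
  · fin_cases j <;> simp [src, tgt, matM, zpol, phi_Xv, phi_Yv, map_ofNat] <;> ring
  · fin_cases j <;> simp [src, tgt, matM, zpol, phi_Xv, phi_Yv, map_ofNat] <;> ring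

/-! ### Injectivity of `φ` -/

/-- The map `(a, b) ↦ ((ab) ^ q, a ^ m + b ^ m)` is onto `ℂ²`: take for `a ^ m`, `b ^ m` the roots
of `T² - BT + A ^ p`, then correct `a` by an `m`-th root of unity. -/
theorem phi_point (p q : ℕ) (hp : 1 ≤ p) (hq : 1 ≤ q) (A B : ℂ) :
    ∃ a b : ℂ, (a * b) ^ q = A ∧ a ^ (p * q) + b ^ (p * q) = B := by
  obtain ⟨d, hd⟩ := IsAlgClosed.exists_pow_nat_eq (B ^ 2 - 4 * A ^ p) (n := 2) (by norm_num)
  have hm : 0 < p * q := Nat.mul_pos hp hq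
  obtain ⟨a, ha⟩ := IsAlgClosed.exists_pow_nat_eq ((B + d) / 2) hm
  obtain ⟨b, hb⟩ := IsAlgClosed.exists_pow_nat_eq ((B - d) / 2) hm
  have hab : ((a * b) ^ q) ^ p = A ^ p := by
    rw [← pow_mul, mul_comm q p, mul_pow, ha, hb]
    linear_combination (-1 / 4 : ℂ) * hd
  by_cases hA : A = 0
  · refine ⟨a, b, ?_, by rw [ha, hb]; ring⟩
    rw [hA, zero_pow (by omega)] at hab
    rw [hA]
    exact pow_eq_zero_iff (by omega) |>.1 hab
  · have hne : (a * b) ^ q ≠ 0 := by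
      intro h
      rw [h, zero_pow (by omega)] at hab
      exact hA (pow_eq_zero_iff (by omega) |>.1 hab.symm)
    -- `w ^ q` is a `p`-th root of unity, since `((ab) ^ q) ^ p = A ^ p`
    obtain ⟨w, hw⟩ := IsAlgClosed.exists_pow_nat_eq (A / (a * b) ^ q) (n := q) (by omega)
    have hwm : w ^ (p * q) = 1 := by
      rw [mul_comm, pow_mul, hw, div_pow, hab, div_self (pow_ne_zero _ hA)]
    refine ⟨w * a, b, ?_, ?_⟩
    · rw [mul_assoc, mul_pow, hw, div_mul_cancel₀ _ hne]
    · rw [mul_pow, hwm, ha, hb]; ring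

theorem phi_injective (p q : ℕ) (hp : 1 ≤ p) (hq : 1 ≤ q) :
    Function.Injective (phi (p * q) q) := by
  rw [injective_iff_map_eq_zero]
  intro P hP
  refine MvPolynomial.funext fun v => ?_
  obtain ⟨a, b, h0, h1⟩ := phi_point p q hp hq (v 0) (v 1)
  have h := congrArg (aeval (R := ℂ) (fun c : Bool => if c then b else a)) hP
  have hcomp : (aeval (R := ℂ) (fun c : Bool => if c then b else a)).comp
      (aeval ![(xv * yv) ^ q, xv ^ (p * q) + yv ^ (p * q)]) = aeval (R := ℂ) v := by
    ext i
    fin_cases i <;> simp [xv, yv, h0, h1]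
  have h2 := DFunLike.congr_fun hcomp P
  simp only [AlgHom.comp_apply] at h2
  have h3 : aeval (R := ℂ) v P = 0 := by
    rw [← h2]; simpa [phi] using h
  simpa [aeval_eq_eval] using h3

/-! ### Linear independence within a block -/

/-- The involution of `S` exchanging `x` and `y`. It fixes the image of `φ`. -/
def swp : Spoly →ₐ[ℂ] Spoly := aeval (fun b => X (!b))

theorem swp_X (b : Bool) : swp (X b) = X (!b) := by simp [swp]
theorem swp_xv : swp xv = yv := swp_X _
theorem swp_yv : swp yv = xv := swp_X _

theorem swp_phi (m q : ℕ) (P : Rpoly) : swp (phi m q P) = phi m q P := by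
  have : swp.comp (aeval ![(xv * yv) ^ q, xv ^ m + yv ^ m]) =
      aeval (R := ℂ) ![(xv * yv) ^ q, xv ^ m + yv ^ m] := by
    ext i
    fin_cases i <;> simp [swp_xv, swp_yv, mul_comm, add_comm]
  exact DFunLike.congr_fun this P

theorem xv_ne_zero : xv ≠ 0 := X_ne_zero _
theorem yv_ne_zero : yv ≠ 0 := X_ne_zero _

theorem D_ne_zero (m : ℕ) (hm : 1 ≤ m) : xv ^ m - yv ^ m ≠ 0 := by
  intro h
  have := congrArg (aeval (R := ℂ) (fun c : Bool => if c then (0 : ℂ) else 1)) h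
  simp [xv, yv, show m ≠ 0 by omega] at this

/-- The determinant is a nonzero constant times `(xy) ^ n * (x ^ m - y ^ m)`. -/
theorem tgt_det (p q : ℕ) (hp : 1 ≤ p) (hq : 2 ≤ q) (t : Idx p q) :
    tgt p q t 0 * swp (tgt p q t 1) - tgt p q t 1 * swp (tgt p q t 0) ≠ 0 := by
  have hm : 1 ≤ p * q := Nat.mul_pos hp (by omega)
  suffices h : ∃ (n : ℕ) (c : ℂ), c ≠ 0 ∧
      tgt p q t 0 * swp (tgt p q t 1) - tgt p q t 1 * swp (tgt p q t 0) =
        C c * (xv * yv) ^ n * (xv ^ (p * q) - yv ^ (p * q)) by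
    obtain ⟨n, c, hc, h⟩ := h
    rw [h]
    exact mul_ne_zero (mul_ne_zero (by simpa using hc)
      (pow_ne_zero _ (mul_ne_zero xv_ne_zero yv_ne_zero))) (D_ne_zero _ hm)
  rcases t with ⟨⟨i, hi⟩, b, a⟩ | ⟨⟨i, hi⟩, b⟩ | ⟨⟨i, hi⟩, b, a, c⟩ | _ | ⟨a, c⟩
  · obtain ⟨k, rfl⟩ : ∃ k, p = i + 1 + k := ⟨p - (i + 1), by omega⟩
    have e2 : i + 1 + k - i = k + 1 := by omega
    refine ⟨a + 1, if b then 1 else -1, by cases b <;> simp, ?_⟩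
    cases b <;> simp [tgt, e2, swp_xv, swp_yv, X_false, X_true] <;> ring
  · obtain ⟨k, rfl⟩ : ∃ k, p = i + 1 + k := ⟨p - (i + 1), by omega⟩
    have e1 : i + 1 + k - (i + 1) = k := by omega
    refine ⟨0, if b then -1 else 1, by cases b <;> simp, ?_⟩
    cases b <;> simp [tgt, e1, swp_xv, swp_yv, X_false, X_true] <;> ring
  · obtain ⟨k, rfl⟩ : ∃ k, p = i + 1 + k := ⟨p - (i + 1), by omega⟩
    have e1 : i + 1 + k - (i + 1) = k := by omega
    refine ⟨a + c + 2, if b then 1 else -1, by cases b <;> simp, ?_⟩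
    cases b <;> simp [tgt, e1, swp_xv, swp_yv, X_false, X_true] <;> ring
  · refine ⟨0, -2, by simp, ?_⟩
    simp [tgt, swp_xv, swp_yv, map_ofNat]; ring
  · refine ⟨a + c + 2, -2, by simp, ?_⟩
    simp [tgt, swp_xv, swp_yv, map_ofNat]; ring

/-- Cramer's rule applied to the relation and its image under `x ↔ y`. -/
theorem tgt_indep (p q : ℕ) (hp : 1 ≤ p) (hq : 2 ≤ q) (t : Idx p q) (α β : Rpoly)
    (h : phi (p * q) q α * tgt p q t 0 + phi (p * q) q β * tgt p q t 1 = 0) : α = 0 ∧ β = 0 := by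
  have h' := congrArg swp h
  simp only [map_add, map_mul, swp_phi, map_zero] at h'
  have hdet := tgt_det p q hp hq t
  have inj := phi_injective p q hp (by omega)
  constructor <;> apply inj <;> rw [map_zero] <;> apply (mul_eq_zero.1 _).resolve_right hdet
  · linear_combination swp (tgt p q t 1) * h - tgt p q t 1 * h'
  · linear_combination tgt p q t 0 * h' - swp (tgt p q t 0) * h

/-! ### Grading -/

/-- Weights of `x` and `y` defining the grading: `x ^ a * y ^ b` has degree `(a - b, b)` in
`ZMod (p * q) × ZMod q`, a group isomorphic to `ℤ² / ⟨(q, q), (m, 0), (0, m)⟩`. -/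
def wt (p q : ℕ) : Bool → ZMod (p * q) × ZMod q := fun b => if b then (-1, 1) else (1, 0)

/-- The label `(r, s, k)` of a piece: it contains the monomials `x ^ a * y ^ b` with `a ≡ r` and
`b ≡ s` mod `q` for which `(a - r) / q - (b - s) / q ≡ k` mod `p`. The representative `k` mod `p` is
chosen so that, for given `r` and `s`, the values of `k` lie in an interval of length less
than `p`. -/
def lab (p q : ℕ) : Idx p q → ℕ × ℕ × ℤ
  | .inl (j, b, a) => if b then (a + 1, 0, (j : ℕ)) else (0, a + 1, -(j : ℕ))
  | .inr (.inl (j, b)) => (0, 0, if b then (j : ℕ) + 1 else -((j : ℕ) + 1))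
  | .inr (.inr (.inl (j, b, a, c))) =>
      (a + 1, c + 1, if b then (j : ℕ) + 1 else -((j : ℕ) + 1))
  | .inr (.inr (.inr (.inl _))) => (0, 0, 0)
  | .inr (.inr (.inr (.inr (a, c)))) => (a + 1, c + 1, 0)

/-- The degree of piece `t`, read off from its label. -/
def tgtWt (p q : ℕ) (t : Idx p q) : ZMod (p * q) × ZMod q :=
  (((((lab p q t).1 : ℤ) + q * (lab p q t).2.2 - ((lab p q t).2.1 : ℤ) : ℤ) : ZMod (p * q)),
    (((lab p q t).2.1 : ℕ) : ZMod q))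

theorem hom_mono (p q a b : ℕ) :
    IsWeightedHomogeneous (wt p q) (xv ^ a * yv ^ b) ((a : ZMod (p * q)) - b, (b : ZMod q)) := by
  have hx := (isWeightedHomogeneous_X ℂ (wt p q) false).pow a
  have hy := (isWeightedHomogeneous_X ℂ (wt p q) true).pow b
  have h := hx.mul hy
  rw [X_false, X_true] at h
  convert h using 1
  ext <;> simp [wt, sub_eq_add_neg]

theorem hom_of_eq (p q a b : ℕ) {P : Spoly} {w : ZMod (p * q) × ZMod q} (hP : P = xv ^ a * yv ^ b)
    (h1 : (a : ZMod (p * q)) - b = w.1) (h2 : (b : ZMod q) = w.2) :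
    IsWeightedHomogeneous (wt p q) P w := by
  have := hom_mono p q a b
  rwa [h1, h2, ← hP] at this

theorem hom_phi (p q : ℕ) (P : Rpoly) :
    IsWeightedHomogeneous (wt p q) (phi (p * q) q P) 0 := by
  have hX : IsWeightedHomogeneous (wt p q) (phi (p * q) q Xv) 0 := by
    rw [phi_Xv]
    exact hom_of_eq p q q q (mul_pow _ _ _) (by simp) (by simp)
  have hY : IsWeightedHomogeneous (wt p q) (phi (p * q) q Yv) 0 := by
    rw [phi_Yv]
    refine (hom_of_eq p q (p * q) 0 (by simp) ?_ (by simp)).add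
      (hom_of_eq p q 0 (p * q) (by simp) ?_ (by simp))
    · simp
    · simp
  induction P using MvPolynomial.induction_on with
  | C a => simpa [phi] using isWeightedHomogeneous_C (wt p q) a
  | add f g hf hg => rw [map_add]; exact hf.add hg
  | mul_X f i hf =>
    rw [map_mul]
    have : IsWeightedHomogeneous (wt p q) (phi (p * q) q (X i)) 0 := by
      fin_cases i
      · exact hX
      · exact hY
    simpa using hf.mul this

theorem hom_tgt (p q : ℕ) (t : Idx p q) (e : Fin 2) :
    IsWeightedHomogeneous (wt p q) (tgt p q t e) (tgtWt p q t) := by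
  have hz : ((p * q : ℕ) : ZMod (p * q)) = 0 := ZMod.natCast_self _
  rcases t with ⟨⟨i, hi⟩, b, a⟩ | ⟨⟨i, hi⟩, b⟩ | ⟨⟨i, hi⟩, b, a, c⟩ | _ | ⟨a, c⟩
  · obtain ⟨k, rfl⟩ : ∃ k, p = i + k := ⟨p - i, by omega⟩
    push_cast at hz
    have e2 : i + k - i = k := by omega
    cases b <;> fin_cases e
    · refine hom_of_eq _ _ (q * k) (a + 1) ?_ ?_ ?_
      · simp [tgt, e2, X_false, X_true]; ring
      · simp [tgtWt, lab]; linear_combination hz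
      · simp [tgtWt, lab]
    · refine (hom_of_eq _ _ 0 (q * i + (a + 1)) ?_ ?_ ?_).neg
      · simp [X_true]; ring
      · simp [tgtWt, lab]; ring
      · simp [tgtWt, lab]
    · refine hom_of_eq _ _ (a + 1) (q * k) ?_ ?_ ?_
      · simp [tgt, e2, X_false, X_true, pow_mul]
      · simp [tgtWt, lab]; linear_combination -hz
      · simp [tgtWt, lab]
    · refine (hom_of_eq _ _ (q * i + (a + 1)) 0 ?_ ?_ ?_).neg
      · simp [X_false]; ring
      · simp [tgtWt, lab]; ring
      · simp [tgtWt, lab]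
  · obtain ⟨k, rfl⟩ : ∃ k, p = (i + 1) + k := ⟨p - (i + 1), by omega⟩
    push_cast at hz
    have e2 : i + 1 + k - (i + 1) = k := by omega
    cases b <;> fin_cases e
    · refine hom_of_eq _ _ (q * k) 0 ?_ ?_ ?_
      · simp [tgt, e2, X_false, X_true]; ring
      · simp [tgtWt, lab]; linear_combination hz
      · simp [tgtWt, lab]
    · refine hom_of_eq _ _ 0 (q * (i + 1)) ?_ ?_ ?_
      · simp [tgt, X_false, X_true]; ring
      · simp [tgtWt, lab]; ring
      · simp [tgtWt, lab]
    · refine hom_of_eq _ _ 0 (q * k) ?_ ?_ ?_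
      · simp [tgt, e2, X_false, X_true]; ring
      · simp [tgtWt, lab]; linear_combination -hz
      · simp [tgtWt, lab]
    · refine hom_of_eq _ _ (q * (i + 1)) 0 ?_ ?_ ?_
      · simp [tgt, X_false, X_true]; ring
      · simp [tgtWt, lab]
      · simp [tgtWt, lab]
  · obtain ⟨k, rfl⟩ : ∃ k, p = (i + 1) + k := ⟨p - (i + 1), by omega⟩
    push_cast at hz
    have e2 : i + 1 + k - (i + 1) = k := by omega
    cases b <;> fin_cases e
    · refine hom_of_eq _ _ (a + 1 + q * k) (c + 1) ?_ ?_ ?_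
      · simp [tgt, e2, X_false, X_true]; ring
      · simp [tgtWt, lab]; linear_combination hz
      · simp [tgtWt, lab]
    · refine (hom_of_eq _ _ (a + 1) (c + 1 + q * (i + 1)) ?_ ?_ ?_).neg
      · simp [X_true]; ring
      · simp [tgtWt, lab]; ring
      · simp [tgtWt, lab]
    · refine hom_of_eq _ _ (a + 1) (c + 1 + q * k) ?_ ?_ ?_
      · simp [tgt, e2, X_false, X_true]; ring
      · simp [tgtWt, lab]; linear_combination -hz
      · simp [tgtWt, lab]
    · refine (hom_of_eq _ _ (a + 1 + q * (i + 1)) (c + 1) ?_ ?_ ?_).neg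
      · simp [X_false]; ring
      · simp [tgtWt, lab]
      · simp [tgtWt, lab]
  · push_cast at hz
    fin_cases e
    · exact hom_of_eq _ _ 0 0 (by simp [tgt]) (by simp [tgtWt, lab]) (by simp [tgtWt, lab])
    · refine (hom_of_eq _ _ (p * q) 0 ?_ ?_ ?_).sub (hom_of_eq _ _ 0 (p * q) ?_ ?_ ?_) <;>
        simp [tgtWt, lab]
  · push_cast at hz
    fin_cases e
    · exact hom_of_eq _ _ (a + 1) (c + 1) (by simp [tgt]) (by simp [tgtWt, lab])
        (by simp [tgtWt, lab])
    · change IsWeightedHomogeneous (wt p q)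
        (xv ^ (a + 1 : ℕ) * yv ^ (c + 1 : ℕ) * (xv ^ (p * q) - yv ^ (p * q))) _
      rw [mul_sub]
      refine (hom_of_eq _ _ (a + 1 + p * q) (c + 1) ?_ ?_ ?_).sub
        (hom_of_eq _ _ (a + 1) (c + 1 + p * q) ?_ ?_ ?_)
      · ring
      · simp [tgtWt, lab]
      · simp [tgtWt, lab]
      · ring
      · simp [tgtWt, lab]
      · simp [tgtWt, lab]

theorem lab_bounds (p q : ℕ) (hq : 2 ≤ q) (t : Idx p q) :
    (lab p q t).1 < q ∧ (lab p q t).2.1 < q := by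
  rcases t with ⟨⟨i, hi⟩, b, a⟩ | ⟨⟨i, hi⟩, b⟩ | ⟨⟨i, hi⟩, b, a, c⟩ | _ | ⟨a, c⟩
  · have := a.2
    cases b <;> simp [lab] <;> omega
  · simp [lab]; omega
  · have := a.2; have := c.2
    simp [lab]; omega
  · simp [lab]; omega
  · have := a.2; have := c.2
    simp [lab]; omega

/-- For `rs = 0` with `(r, s) ≠ (0, 0)` the third labels fill `[0, p)` or `(-p, 0]`; otherwise they
fill `[-(p - 1) / 2, (p - 1) / 2]`. -/
theorem lab_close (p q : ℕ) (hpodd : Odd p) (t t' : Idx p q)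
    (h1 : (lab p q t).1 = (lab p q t').1) (h2 : (lab p q t).2.1 = (lab p q t').2.1) :
    |(lab p q t).2.2 - (lab p q t').2.2| < p := by
  obtain ⟨n, hn⟩ := hpodd
  rw [abs_lt]
  rcases t with ⟨⟨i, hi⟩, _ | _, a⟩ | ⟨⟨i, hi⟩, _ | _⟩ | ⟨⟨i, hi⟩, _ | _, a, c⟩ | _ | ⟨a, c⟩ <;>
  rcases t' with ⟨⟨i', hi'⟩, _ | _, a'⟩ | ⟨⟨i', hi'⟩, _ | _⟩ | ⟨⟨i', hi'⟩, _ | _, a', c'⟩ | _ |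
    ⟨a', c'⟩ <;>
  simp [lab] at h1 h2 ⊢ <;> omega

theorem lab_injective (p q : ℕ) : Function.Injective (lab p q) := by
  intro t t' h
  rcases t with ⟨⟨i, hi⟩, _ | _, a⟩ | ⟨⟨i, hi⟩, _ | _⟩ | ⟨⟨i, hi⟩, _ | _, a, c⟩ | _ | ⟨a, c⟩ <;>
  rcases t' with ⟨⟨i', hi'⟩, _ | _, a'⟩ | ⟨⟨i', hi'⟩, _ | _⟩ | ⟨⟨i', hi'⟩, _ | _, a', c'⟩ | _ |
    ⟨a', c'⟩ <;>
  simp [lab, Fin.ext_iff] at h ⊢ <;> omega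

theorem tgtWt_injective (p q : ℕ) (hpodd : Odd p) (hq : 2 ≤ q) :
    Function.Injective (tgtWt p q) := by
  intro t t' h
  obtain ⟨hr, hs⟩ := lab_bounds p q hq t
  obtain ⟨hr', hs'⟩ := lab_bounds p q hq t'
  have hclose := lab_close p q hpodd t t'
  apply lab_injective p q
  simp only [tgtWt, Prod.mk.injEq] at h
  obtain ⟨h1, h2⟩ := h
  generalize hL : lab p q t = L at *
  generalize hL' : lab p q t' = L' at *
  obtain ⟨r, s, K⟩ := L
  obtain ⟨r', s', K'⟩ := L'
  simp only at *
  have hss : s = s' := by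
    have := (ZMod.natCast_eq_natCast_iff' _ _ _).1 h2
    rwa [Nat.mod_eq_of_lt hs, Nat.mod_eq_of_lt hs'] at this
  subst hss
  obtain ⟨e, he⟩ := (ZMod.intCast_eq_intCast_iff_dvd_sub _ _ _).1 h1
  push_cast at he
  have hrr : r = r' := by
    have : (r : ℤ) ≡ r' [ZMOD q] := by
      refine (Int.modEq_iff_dvd.2 ⟨p * e - (K' - K), ?_⟩)
      linear_combination he
    have := Int.ModEq.eq this
    rw [Int.emod_eq_of_lt (by omega) (by omega), Int.emod_eq_of_lt (by omega) (by omega)] at this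
    exact_mod_cast this
  subst hrr
  have hK : K - K' = 0 := by
    refine Int.eq_zero_of_abs_lt_dvd (m := p) ⟨-e, ?_⟩ (hclose rfl rfl)
    have hq0 : (q : ℤ) ≠ 0 := by omega
    apply mul_left_cancel₀ hq0
    linear_combination -he
  have : K = K' := by omega
  rw [this]

theorem tgt_injective (p q : ℕ) (hp : 1 ≤ p) (hpodd : Odd p) (hq : 2 ≤ q)
    (v : Idx p q → Fin 2 → Rpoly)
    (h : ∑ t, (phi (p * q) q (v t 0) * tgt p q t 0 + phi (p * q) q (v t 1) * tgt p q t 1) = 0) :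
    v = 0 := by
  have hom : ∀ t, IsWeightedHomogeneous (wt p q)
      (phi (p * q) q (v t 0) * tgt p q t 0 + phi (p * q) q (v t 1) * tgt p q t 1)
      (tgtWt p q t) := by
    intro t
    refine IsWeightedHomogeneous.add ?_ ?_
    · simpa using (hom_phi p q (v t 0)).mul (hom_tgt p q t 0)
    · simpa using (hom_phi p q (v t 1)).mul (hom_tgt p q t 1)
  -- the degree `tgtWt t` part of the relation involves only the pair `tgt t`
  have hzero : ∀ t, v t 0 = 0 ∧ v t 1 = 0 := by
    intro t
    refine tgt_indep p q hp hq t _ _ ?_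
    have h' := congrArg (weightedHomogeneousComponent (wt p q) (tgtWt p q t)) h
    rw [map_sum, map_zero, Finset.sum_eq_single t] at h'
    · rwa [(hom t).weightedHomogeneousComponent_same] at h'
    · intro t' _ hne
      exact (hom t').weightedHomogeneousComponent_ne _
        (fun e => hne (tgtWt_injective p q hpodd hq e.symm))
    · simp
  funext t e
  fin_cases e
  · exact (hzero t).1
  · exact (hzero t).2

/-! ### Generation -/

theorem phi_C (m q : ℕ) (c : ℂ) : phi m q (C c) = C c := by
  simp [phi]

/-- Generators of `S` over `R`. By induction on the total degree, a monomial `x ^ a * y ^ b` with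
`a, b ≥ q` is `X` times a smaller one, and one with an exponent `≥ (p + 1) q` is `Y` times a smaller
one, up to a monomial of the former kind. -/
theorem gen_top (p q : ℕ) (hp : 1 ≤ p) (hq : 1 ≤ q) (N : AddSubgroup Spoly)
    (hN : ∀ P, ∀ f ∈ N, phi (p * q) q P * f ∈ N)
    (h : ∀ r < q, ∀ s < q, ∀ i ≤ p, xv ^ r * yv ^ s * (xv ^ q) ^ i ∈ N ∧
      xv ^ r * yv ^ s * (yv ^ q) ^ i ∈ N) (f : Spoly) : f ∈ N := by
  have mono : ∀ n a b : ℕ, a + b = n → xv ^ a * yv ^ b ∈ N := by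
    intro n
    induction n using Nat.strong_induction_on with
    | _ n ih =>
    have hX : ∀ a b : ℕ, q ≤ a → q ≤ b → a + b ≤ n → xv ^ a * yv ^ b ∈ N := by
      intro a b ha hb hab
      obtain ⟨a, rfl⟩ := Nat.exists_eq_add_of_le ha
      obtain ⟨b, rfl⟩ := Nat.exists_eq_add_of_le hb
      have := hN Xv _ (ih (a + b) (by omega) a b rfl)
      rw [phi_Xv] at this
      convert this using 1
      ring
    intro a b hab
    have hpq : q ≤ p * q := Nat.le_mul_of_pos_left q hp
    by_cases haq : a < q <;> by_cases hbq : b < q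
    · simpa using (h a haq b hbq 0 (by omega)).1
    · by_cases hb : b < q * (p + 1)
      · have h1 := (h a haq (b % q) (Nat.mod_lt _ (by omega)) (b / q)
          (Nat.lt_succ_iff.1 (Nat.div_lt_of_lt_mul hb))).2
        rwa [mul_assoc, ← pow_mul, ← pow_add, Nat.mod_add_div] at h1
      · have e : q * (p + 1) = p * q + q := by ring
        obtain ⟨b, rfl⟩ := Nat.exists_eq_add_of_le (show p * q ≤ b by omega)
        have h1 := hN Yv _ (ih (a + b) (by omega) a b rfl)
        have h2 := hX (a + p * q) b (by omega) (by omega) (by omega)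
        rw [phi_Yv] at h1
        convert N.sub_mem h1 h2 using 1
        ring
    · by_cases ha : a < q * (p + 1)
      · have h1 := (h (a % q) (Nat.mod_lt _ (by omega)) b hbq (a / q)
          (Nat.lt_succ_iff.1 (Nat.div_lt_of_lt_mul ha))).1
        rwa [mul_right_comm, ← pow_mul, ← pow_add, Nat.mod_add_div] at h1
      · have e : q * (p + 1) = p * q + q := by ring
        obtain ⟨a, rfl⟩ := Nat.exists_eq_add_of_le (show p * q ≤ a by omega)
        have h1 := hN Yv _ (ih (a + b) (by omega) a b rfl)
        have h2 := hX a (b + p * q) (by omega) (by omega) (by omega)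
        rw [phi_Yv] at h1
        convert N.sub_mem h1 h2 using 1
        ring
    · exact hX a b (by omega) (by omega) (by omega)
  induction f using MvPolynomial.induction_on' with
  | monomial u c =>
    have := hN (C c) _ (mono _ (u false) (u true) rfl)
    rw [phi_C] at this
    convert this using 1
    rw [monomial_eq, Finsupp.prod_fintype _ _ (by simp), Fintype.prod_bool, X_false, X_true,
      mul_comm (xv ^ _)]
  | add f g hf hg => exact N.add_mem hf hg

/-- The elements `c * u ^ i`, `c * v ^ i` (`i ≤ p`) obtained from bases of the pieces of
label `k` with `|k| ≤ (p - 1) / 2`, where `p` is odd. -/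
theorem rowA (p q : ℕ) (hpodd : Odd p) (N : AddSubgroup Spoly)
    (hN : ∀ P, ∀ f ∈ N, phi (p * q) q P * f ∈ N) (c : Spoly) (h1 : c ∈ N)
    (hD : c * (xv ^ (p * q) - yv ^ (p * q)) ∈ N)
    (h : ∀ j < (p - 1) / 2, ∀ b : Bool, c * (X b ^ q) ^ (p - (j + 1)) ∈ N ∧
      c * (X (!b) ^ q) ^ (j + 1) ∈ N) :
    ∀ i ≤ p, c * (xv ^ q) ^ i ∈ N ∧ c * (yv ^ q) ^ i ∈ N := by
  obtain ⟨n, hn⟩ := hpodd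
  intro i hi
  -- `c (x ^ m + y ^ m)` and `c (x ^ m - y ^ m)` give the case `i = p`, as `2` is invertible
  have hY := hN Yv _ h1
  rw [phi_Yv] at hY
  have half : ∀ f, 2 * f ∈ N → f ∈ N := by
    intro f hf
    have := hN (C (1 / 2)) _ hf
    rw [phi_C] at this
    convert this using 1
    rw [← mul_assoc, ← map_ofNat (C : ℂ →+* Spoly) 2, ← map_mul]
    simp
  rcases Nat.eq_zero_or_pos i with rfl | hi0
  · simpa using h1
  rcases hi.eq_or_lt with rfl | hip
  · constructor <;> apply half
    · convert N.add_mem hY hD using 1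
      rw [← pow_mul, mul_comm q]; ring
    · convert N.sub_mem hY hD using 1
      rw [← pow_mul, mul_comm q]; ring
  by_cases hin : i ≤ n
  · have hj := h (i - 1) (by omega)
    rw [show i - 1 + 1 = i by omega] at hj
    exact ⟨(hj true).2, (hj false).2⟩
  · have hj := h (p - i - 1) (by omega)
    rw [show p - (p - i - 1 + 1) = i by omega] at hj
    exact ⟨(hj false).1, (hj true).1⟩

/-- The elements `c * u ^ i`, `c * v ^ i` (`i ≤ p`) obtained from bases of the pieces of label `k`
in `[0, p)` or `(-p, 0]`. -/
theorem rowB (p q : ℕ) (hp : 1 ≤ p) (N : AddSubgroup Spoly)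
    (hN : ∀ P, ∀ f ∈ N, phi (p * q) q P * f ∈ N) (c : Spoly) (b : Bool)
    (h : ∀ j < p, c * (X b ^ q) ^ (p - j) ∈ N ∧ c * (X (!b) ^ q) ^ j ∈ N) :
    ∀ i ≤ p, c * (xv ^ q) ^ i ∈ N ∧ c * (yv ^ q) ^ i ∈ N := by
  have hY := hN Yv _ (by simpa using (h 0 (by omega)).2 : c ∈ N)
  have hp0 := (h 0 (by omega)).1
  suffices hb : ∀ i ≤ p, c * (X b ^ q) ^ i ∈ N ∧ c * (X (!b) ^ q) ^ i ∈ N by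
    intro i hi
    have := hb i hi
    cases b
    · exact this
    · exact this.symm
  intro i hi
  constructor
  · rcases Nat.eq_zero_or_pos i with rfl | hi0
    · simpa using (h 0 (by omega)).2
    · have := (h (p - i) (by omega)).1
      rwa [show p - (p - i) = i by omega] at this
  · rcases hi.eq_or_lt with rfl | hip
    -- `c v ^ p = Y c - c u ^ p` (or with `u` and `v` exchanged)
    · convert N.sub_mem hY hp0 using 1
      rw [phi_Yv, ← pow_mul, ← pow_mul, mul_comm q]
      cases b <;> simp [X_false, X_true] <;> ring
    · exact (h i hip).2

theorem tgt_span (p q : ℕ) (hp : 1 ≤ p) (hpodd : Odd p) (hq : 2 ≤ q) (N : AddSubgroup Spoly)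
    (hN : ∀ P, ∀ f ∈ N, phi (p * q) q P * f ∈ N) (h : ∀ t e, tgt p q t e ∈ N) (f : Spoly) :
    f ∈ N := by
  refine gen_top p q hp (by omega) N hN (fun r hr s hs => ?_) f
  rcases Nat.eq_zero_or_pos r with rfl | hr0 <;> rcases Nat.eq_zero_or_pos s with rfl | hs0
  · refine rowA p q hpodd N hN _ ?_ ?_ fun j hj b => ⟨?_, ?_⟩
    · simpa [tgt] using h (.inr (.inr (.inr (.inl ())))) 0
    · simpa [tgt] using h (.inr (.inr (.inr (.inl ())))) 1
    · simpa [tgt] using h (.inr (.inl (⟨j, hj⟩, b))) 0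
    · simpa [tgt] using h (.inr (.inl (⟨j, hj⟩, b))) 1
  · obtain ⟨s, rfl⟩ : ∃ k, s = k + 1 := ⟨s - 1, by omega⟩
    refine rowB p q hp N hN _ false fun j hj => ⟨?_, ?_⟩
    · simpa [tgt, X_true] using h (.inl (⟨j, hj⟩, false, ⟨s, by omega⟩)) 0
    · simpa [tgt, X_true] using N.neg_mem (h (.inl (⟨j, hj⟩, false, ⟨s, by omega⟩)) 1)
  · obtain ⟨r, rfl⟩ : ∃ k, r = k + 1 := ⟨r - 1, by omega⟩
    refine rowB p q hp N hN _ true fun j hj => ⟨?_, ?_⟩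
    · simpa [tgt, X_false] using h (.inl (⟨j, hj⟩, true, ⟨r, by omega⟩)) 0
    · simpa [tgt, X_false] using N.neg_mem (h (.inl (⟨j, hj⟩, true, ⟨r, by omega⟩)) 1)
  · obtain ⟨r, rfl⟩ : ∃ k, r = k + 1 := ⟨r - 1, by omega⟩
    obtain ⟨s, rfl⟩ : ∃ k, s = k + 1 := ⟨s - 1, by omega⟩
    have hr' : r < q - 1 := by omega
    have hs' : s < q - 1 := by omega
    refine rowA p q hpodd N hN _ ?_ ?_ fun j hj b => ⟨?_, ?_⟩
    · simpa [tgt] using h (.inr (.inr (.inr (.inr (⟨r, hr'⟩, ⟨s, hs'⟩))))) 0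
    · simpa [tgt] using h (.inr (.inr (.inr (.inr (⟨r, hr'⟩, ⟨s, hs'⟩))))) 1
    · simpa [tgt] using h (.inr (.inr (.inl (⟨j, hj⟩, b, ⟨r, hr'⟩, ⟨s, hs'⟩)))) 0
    · simpa [tgt] using N.neg_mem (h (.inr (.inr (.inl (⟨j, hj⟩, b, ⟨r, hr'⟩, ⟨s, hs'⟩)))) 1)

theorem src_span (p q : ℕ) (hp : 1 ≤ p) (hpodd : Odd p) (hq : 2 ≤ q) (N : AddSubgroup Spoly)
    (hN : ∀ P, ∀ f ∈ N, phi (p * q) q P * f ∈ N) (h : ∀ t e, src p q t e ∈ N) (f : Spoly) :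
    f ∈ N := by
  have hsgn : ∀ b f, sgn b * f ∈ N → f ∈ N := by
    intro b f hf
    cases b
    · simpa [sgn] using hf
    · simpa [sgn] using hf
  refine gen_top p q hp (by omega) N hN (fun r hr s hs => ?_) f
  by_cases hr0 : r = q - 1 <;> by_cases hs0 : s = q - 1
  · subst hr0 hs0
    refine rowA p q hpodd N hN _ ?_ ?_ fun j hj b => ⟨?_, ?_⟩
    · simpa [src] using h (.inr (.inr (.inr (.inl ())))) 1
    · simpa [src] using h (.inr (.inr (.inr (.inl ())))) 0
    · simpa [src] using hsgn _ _ (h (.inr (.inl (⟨j, hj⟩, b))) 0)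
    · refine hsgn b _ ?_
      simpa [src] using N.neg_mem (h (.inr (.inl (⟨j, hj⟩, b))) 1)
  · subst hr0
    have hs' : s < q - 1 := by omega
    refine rowB p q hp N hN _ true fun j hj => ⟨?_, ?_⟩
    · have := hsgn _ _ (h (.inl (⟨p - 1 - j, by omega⟩, false, ⟨s, hs'⟩)) 1)
      simpa [X_false, X_true, show p - 1 - j + 1 = p - j by omega] using this
    · have := hsgn _ _ (h (.inl (⟨p - 1 - j, by omega⟩, false, ⟨s, hs'⟩)) 0)
      simpa [X_false, X_true, show p - (p - 1 - j + 1) = j by omega] using this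
  · subst hs0
    have hr' : r < q - 1 := by omega
    rw [mul_comm (xv ^ r)]
    refine rowB p q hp N hN _ false fun j hj => ⟨?_, ?_⟩
    · have := hsgn _ _ (h (.inl (⟨p - 1 - j, by omega⟩, true, ⟨r, hr'⟩)) 1)
      simpa [X_false, X_true, show p - 1 - j + 1 = p - j by omega] using this
    · have := hsgn _ _ (h (.inl (⟨p - 1 - j, by omega⟩, true, ⟨r, hr'⟩)) 0)
      simpa [X_false, X_true, show p - (p - 1 - j + 1) = j by omega] using this
  · have hr' : r < q - 1 := by omega
    have hs' : s < q - 1 := by omega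
    refine rowA p q hpodd N hN _ ?_ ?_ fun j hj b => ⟨?_, ?_⟩
    · simpa [src] using h (.inr (.inr (.inr (.inr (⟨r, hr'⟩, ⟨s, hs'⟩))))) 1
    · simpa [src] using h (.inr (.inr (.inr (.inr (⟨r, hr'⟩, ⟨s, hs'⟩))))) 0
    · simpa using hsgn _ _ (h (.inr (.inr (.inl (⟨j, hj⟩, b, ⟨r, hr'⟩, ⟨s, hs'⟩)))) 0)
    · simpa using hsgn _ _ (h (.inr (.inr (.inl (⟨j, hj⟩, b, ⟨r, hr'⟩, ⟨s, hs'⟩)))) 1)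

/-! ### Cokernel of multiplication -/

/-- Let `B` be an `A`-module through `φ`, let the pairs `g t` form a basis of `B`, and let the pairs
`h t` generate `B`. If `z * h t` is expressed through `g t` by the matrix `M t`, then `B/(z)` is the
direct sum of the cokernels of the `M t`: both are the quotient of the free module `A^(2ι)` by the
image of the `M t`. Independence of `h` is not needed. The generation hypotheses say that an
`A`-stable subgroup containing the pairs is everything, which avoids a module instance on `B` in the
statement. -/
theorem quot_equiv_of_pairs {A B ι : Type} [CommRing A] [CommRing B] [Fintype ι] [DecidableEq ι]
    (φ : A →+* B) (z : B) (g h : ι → Fin 2 → B) (M : ι → Matrix (Fin 2) (Fin 2) A)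
    (hz : ∀ t j, z * h t j = φ (M t 0 j) * g t 0 + φ (M t 1 j) * g t 1)
    (hinj : ∀ v : ι → Fin 2 → A, ∑ t, (φ (v t 0) * g t 0 + φ (v t 1) * g t 1) = 0 → v = 0)
    (hg : ∀ N : AddSubgroup B, (∀ P, ∀ f ∈ N, φ P * f ∈ N) → (∀ t e, g t e ∈ N) → ∀ f, f ∈ N)
    (hh : ∀ N : AddSubgroup B, (∀ P, ∀ f ∈ N, φ P * f ∈ N) → (∀ t e, h t e ∈ N) → ∀ f, f ∈ N) :
    letI : Module A (B ⧸ Ideal.span {z}) := ((Ideal.Quotient.mk (Ideal.span {z})).comp φ).toModule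
    Nonempty ((B ⧸ Ideal.span {z}) ≃ₗ[A]
      ((t : ι) → (Fin 2 → A) ⧸ LinearMap.range (M t).mulVecLin)) := by
  let _ : Module A B := φ.toModule
  let _ : Module A (B ⧸ Ideal.span {z}) := ((Ideal.Quotient.mk (Ideal.span {z})).comp φ).toModule
  have smul_def : ∀ (a : A) (b : B), a • b = φ a * b := fun _ _ => rfl
  -- the linear combinations of the pairs with coefficients `v`
  let comb : (ι → Fin 2 → B) → (ι → Fin 2 → A) →ₗ[A] B := fun g =>
    ∑ t, (((LinearMap.toSpanSingleton A B (g t 0)).comp (LinearMap.proj 0)).comp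
        (LinearMap.proj t) +
      ((LinearMap.toSpanSingleton A B (g t 1)).comp (LinearMap.proj 1)).comp (LinearMap.proj t))
  have comb_apply : ∀ g v, comb g v = ∑ t, (φ (v t 0) * g t 0 + φ (v t 1) * g t 1) := by
    intro g v
    simp [comb, smul_def]
  have comb_surj : ∀ g : ι → Fin 2 → B, (∀ N : AddSubgroup B, (∀ P, ∀ f ∈ N, φ P * f ∈ N) →
      (∀ t e, g t e ∈ N) → ∀ f, f ∈ N) → Function.Surjective (comb g) := by
    intro g hg f
    refine hg (LinearMap.range (comb g)).toAddSubgroup ?_ ?_ f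
    · rintro P _ ⟨v, rfl⟩
      exact ⟨P • v, by rw [map_smul, smul_def]⟩
    · intro t e
      refine ⟨Pi.single t (Pi.single e 1), ?_⟩
      rw [comb_apply, Finset.sum_eq_single t]
      · fin_cases e <;> simp
      · intro t' _ ht'
        simp [ht']
      · simp
  let π : B →ₗ[A] (B ⧸ Ideal.span {z}) :=
    { toFun := Ideal.Quotient.mk _
      map_add' := map_add _
      map_smul' := fun a b => map_mul (Ideal.Quotient.mk (Ideal.span {z})) (φ a) b }
  have π_surj : Function.Surjective π := Ideal.Quotient.mk_surjective
  have π_ker : ∀ b, π b = 0 ↔ ∃ w, b = z * w := by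
    intro b
    exact Ideal.Quotient.eq_zero_iff_mem.trans Ideal.mem_span_singleton
  let F := π.comp (comb g)
  have hF : Function.Surjective F := π_surj.comp (comb_surj g hg)
  let H : (ι → Fin 2 → A) →ₗ[A] ((t : ι) → (Fin 2 → A) ⧸ LinearMap.range (M t).mulVecLin) :=
    LinearMap.pi fun t => (Submodule.mkQ _).comp (LinearMap.proj t)
  have hH : Function.Surjective H := by
    intro y
    choose v hv using fun t => Submodule.mkQ_surjective _ (y t)
    exact ⟨v, funext hv⟩
  have hmul : ∀ w : ι → Fin 2 → A, comb g (fun t => (M t).mulVec (w t)) = z * comb h w := by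
    intro w
    rw [comb_apply, comb_apply, Finset.mul_sum]
    refine Finset.sum_congr rfl fun t _ => ?_
    have h0 := hz t 0
    have h1 := hz t 1
    simp only [Matrix.mulVec, dotProduct, Fin.sum_univ_two, map_add, map_mul]
    linear_combination -φ (w t 0) * h0 - φ (w t 1) * h1
  have hinj' : ∀ v, comb g v = 0 → v = 0 := fun v hv => hinj v (by rw [← comb_apply, hv])
  have hker : LinearMap.ker F = LinearMap.ker H := by
    ext v
    have e1 : v ∈ LinearMap.ker F ↔ ∃ w, comb g v = z * w := π_ker _
    have e2 : v ∈ LinearMap.ker H ↔ ∀ t, ∃ w, (M t).mulVec w = v t := by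
      rw [LinearMap.mem_ker, funext_iff]
      refine forall_congr' fun t => ?_
      exact (Submodule.Quotient.mk_eq_zero _).trans LinearMap.mem_range
    rw [e1, e2]
    constructor
    · rintro ⟨b, hb⟩ t
      obtain ⟨w, rfl⟩ := comb_surj h hh b
      rw [← hmul, ← sub_eq_zero, ← map_sub] at hb
      have := congrFun (hinj' _ hb) t
      exact ⟨w t, (sub_eq_zero.1 this).symm⟩
    · intro hw
      choose w hw using hw
      refine ⟨comb h w, ?_⟩
      rw [← hmul]
      congr 1
      exact (funext hw).symm
  exact ⟨(LinearMap.quotKerEquivOfSurjective F hF).symm ≪≫ₗ Submodule.quotEquivOfEq _ _ hker ≪≫ₗ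
    LinearMap.quotKerEquivOfSurjective H hH⟩

theorem coker_diag (f g : Rpoly) :
    Nonempty (coker !![f, 0; 0, g] ≃ₗ[Rpoly] (Rpoly ⧸ Ideal.span {f}) × (Rpoly ⧸ Ideal.span {g})) := by
  let H : (Fin 2 → Rpoly) →ₗ[Rpoly] (Rpoly ⧸ Ideal.span {f}) × (Rpoly ⧸ Ideal.span {g}) :=
    ((Submodule.mkQ _).comp (LinearMap.proj 0)).prod ((Submodule.mkQ _).comp (LinearMap.proj 1))
  have hH : Function.Surjective H := by
    rintro ⟨a, b⟩
    obtain ⟨a, rfl⟩ := Submodule.mkQ_surjective _ a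
    obtain ⟨b, rfl⟩ := Submodule.mkQ_surjective _ b
    exact ⟨![a, b], rfl⟩
  have hker : LinearMap.range (Matrix.mulVecLin !![f, 0; 0, g]) = LinearMap.ker H := by
    ext v
    have e : v ∈ LinearMap.ker H ↔ f ∣ v 0 ∧ g ∣ v 1 := by
      rw [LinearMap.mem_ker, Prod.ext_iff]
      exact and_congr
        ((Submodule.Quotient.mk_eq_zero _).trans Ideal.mem_span_singleton)
        ((Submodule.Quotient.mk_eq_zero _).trans Ideal.mem_span_singleton)
    rw [e, LinearMap.mem_range]
    constructor
    · rintro ⟨w, rfl⟩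
      simp
    · rintro ⟨⟨a, ha⟩, ⟨b, hb⟩⟩
      refine ⟨![a, b], ?_⟩
      ext i : 1
      fin_cases i <;> simp [ha, hb, mul_comm]
  exact ⟨Submodule.quotEquivOfEq _ _ hker ≪≫ₗ LinearMap.quotKerEquivOfSurjective H hH⟩

/-! ### Reindexing -/

/-- Families on `α × β` that depend only on the first coordinate, with `β` renamed to `γ`. -/
def curryEquiv (α β γ : Type) (e : β ≃ γ) (V : α → Type) [∀ a, AddCommGroup (V a)]
    [∀ a, Module Rpoly (V a)] :
    ((t : α × β) → V t.1) ≃ₗ[Rpoly] ((a : α) → γ → V a) where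
  toFun f a c := f (a, e.symm c)
  invFun f t := f t.1 (e t.2)
  map_add' _ _ := rfl
  map_smul' _ _ := rfl
  left_inv f := by
    funext ⟨a, b⟩
    change f (a, e.symm (e b)) = f (a, b)
    rw [e.symm_apply_apply]
  right_inv f := by ext; simp

/-- Collecting the summands of equal type. The count of blocks `diag(Y² - 4X^p, 1)` is
`(q - 1)² = (q - 1) + 2 * choose (q - 1) 2`. -/
theorem regroup (p q : ℕ) :
    Nonempty (((t : Idx p q) → coker (matM p q t)) ≃ₗ[Rpoly]
      ((j : Fin p) → Fin (2 * (q - 1)) → coker (xiM p ((j : ℕ) + 1))) ×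
      ((j : Fin ((p - 1) / 2)) → Fin 2 → coker (psiM p ((j : ℕ) + 1))) ×
      ((j : Fin ((p - 1) / 2)) → Fin (2 * (q - 1) ^ 2) → coker (phiM p ((j : ℕ) + 1))) ×
      (Rpoly ⧸ Ideal.span {Xv}) ×
      (Fin ((q - 1) + 2 * Nat.choose (q - 1) 2) → Rpoly ⧸ Ideal.span {Yv ^ 2 - 4 * Xv ^ p}) ×
      (Rpoly ⧸ Ideal.span {Xv * (Yv ^ 2 - 4 * Xv ^ p)})) := by
  obtain ⟨e1⟩ := coker_diag (Xv * (Yv ^ 2 - 4 * Xv ^ p)) Xv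
  obtain ⟨e2⟩ := coker_diag (Yv ^ 2 - 4 * Xv ^ p) 1
  have : Subsingleton (Rpoly ⧸ Ideal.span {(1 : Rpoly)}) := by
    rw [Ideal.span_singleton_one]
    exact Submodule.Quotient.subsingleton_iff.2 rfl
  let _ : Unique (Rpoly ⧸ Ideal.span {(1 : Rpoly)}) := Unique.mk' _
  have hcard : Fintype.card (Fin (q - 1) × Fin (q - 1)) =
      Fintype.card (Fin ((q - 1) + 2 * Nat.choose (q - 1) 2)) := by
    simp only [Fintype.card_prod, Fintype.card_fin]
    rw [Nat.choose_two_right, Nat.two_mul_div_two_of_even (Nat.even_mul_pred_self _)]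
    cases q - 1 with
    | zero => rfl
    | succ n => simp; ring
  have k1 : Bool × Fin (q - 1) ≃ Fin (2 * (q - 1)) := Fintype.equivOfCardEq (by simp)
  have k2 : Bool ≃ Fin 2 := Fintype.equivOfCardEq (by simp)
  have k3 : Bool × Fin (q - 1) × Fin (q - 1) ≃ Fin (2 * (q - 1) ^ 2) :=
    Fintype.equivOfCardEq (by simp [sq])
  have k4 := Fintype.equivOfCardEq hcard
  let E1 := curryEquiv _ _ _ k1 (fun j : Fin p => coker (xiM p ((j : ℕ) + 1)))
  let E2 := curryEquiv _ _ _ k2 (fun j : Fin ((p - 1) / 2) => coker (psiM p ((j : ℕ) + 1)))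
  let E3 := curryEquiv _ _ _ k3 (fun j : Fin ((p - 1) / 2) => coker (phiM p ((j : ℕ) + 1)))
  let E5 : (Fin (q - 1) × Fin (q - 1) → coker !![Yv ^ 2 - 4 * Xv ^ p, 0; 0, 1]) ≃ₗ[Rpoly]
      (Fin ((q - 1) + 2 * Nat.choose (q - 1) 2) → Rpoly ⧸ Ideal.span {Yv ^ 2 - 4 * Xv ^ p}) :=
    LinearEquiv.piCongrRight (fun _ => e2 ≪≫ₗ LinearEquiv.prodUnique) ≪≫ₗ
      LinearEquiv.funCongrLeft Rpoly _ k4.symm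
  exact ⟨LinearEquiv.sumPiEquivProdPi Rpoly _ _ (fun t => coker (matM p q t)) ≪≫ₗ (E1.prodCongr
    (LinearEquiv.sumPiEquivProdPi Rpoly _ _ _ ≪≫ₗ (E2.prodCongr
    (LinearEquiv.sumPiEquivProdPi Rpoly _ _ _ ≪≫ₗ (E3.prodCongr
    (LinearEquiv.sumPiEquivProdPi Rpoly _ _ _ ≪≫ₗ
      ((LinearEquiv.piUnique Rpoly _ ≪≫ₗ e1 ≪≫ₗ LinearEquiv.prodComm _ _ _).prodCongr E5 ≪≫ₗ
        LinearEquiv.prodAssoc _ _ _ _ ≪≫ₗ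
        (LinearEquiv.refl _ _).prodCongr (LinearEquiv.prodComm _ _ _))))))))⟩

theorem stmt7 (p q : ℕ) (hp : 1 ≤ p) (hpodd : Odd p) (hq : 2 ≤ q) :
    letI : Module Rpoly (Spoly ⧸ Ideal.span {zpol (p * q)}) :=
      ((Ideal.Quotient.mk (Ideal.span {zpol (p * q)})).comp (phi (p * q) q)).toModule
    Nonempty ((Spoly ⧸ Ideal.span {zpol (p * q)}) ≃ₗ[Rpoly]
      ((j : Fin p) → Fin (2 * (q - 1)) → coker (xiM p ((j : ℕ) + 1))) ×
      ((j : Fin ((p - 1) / 2)) → Fin 2 → coker (psiM p ((j : ℕ) + 1))) ×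
      ((j : Fin ((p - 1) / 2)) → Fin (2 * (q - 1) ^ 2) → coker (phiM p ((j : ℕ) + 1))) ×
      (Rpoly ⧸ Ideal.span {Xv}) ×
      (Fin ((q - 1) + 2 * Nat.choose (q - 1) 2) → Rpoly ⧸ Ideal.span {Yv ^ 2 - 4 * Xv ^ p}) ×
      (Rpoly ⧸ Ideal.span {Xv * (Yv ^ 2 - 4 * Xv ^ p)})) := by
  classical
  obtain ⟨e⟩ := quot_equiv_of_pairs (phi (p * q) q) (zpol (p * q)) (tgt p q) (src p q) (matM p q)
    (zpol_mul_src p q hq) (fun v h => tgt_injective p q hp hpodd hq v h)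
    (tgt_span p q hp hpodd hq) (src_span p q hp hpodd hq)
  obtain ⟨r⟩ := regroup p q
  exact ⟨e.trans r⟩
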